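/- arXiv:math/0502455 — 5 statements merged into one kernel-verified Lean document; each statement's English description precedes it below -/
import Mathlib

section
/- Let P be a collection of nonempty bounded open intervals of ℝ with ∪P = (a,b) for real numbers a < b. If there exist x, y ∈ (a,b) such that L_P(x) = a and R_P(y) = b, then (a,b) admits a finite inner cover with respect to P. -/
open Set

/-- A linked list of (nonempty bounded open) intervals `(a i, b i)` of `ℝ`, indexed by a
nonempty set `S` of consecutive integers, consecutive intervals overlapping and the chain
condition `a i < b (i-1) < a (i+1) < b i` holding whenever the indices involved lie in `S`. -/
structure LinkedList where
  S : Set ℤ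
  nonempty : S.Nonempty
  consecutive : ∀ i ∈ S, ∀ k ∈ S, ∀ j : ℤ, i ≤ j → j ≤ k → j ∈ S
  a : ℤ → ℝ
  b : ℤ → ℝ
  lt : ∀ i ∈ S, a i < b i
  mono_a : ∀ i : ℤ, i ∈ S → i + 1 ∈ S → a i < a (i + 1)
  mono_b : ∀ i : ℤ, i ∈ S → i + 1 ∈ S → b i < b (i + 1)
  overlap : ∀ i : ℤ, i ∈ S → i + 1 ∈ S → a (i + 1) < b i
  gap : ∀ i : ℤ, i ∈ S → i + 2 ∈ S → b i < a (i + 2)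

namespace LinkedList

/-- The `i`-th interval of the list. -/
def interval (L : LinkedList) (i : ℤ) : Set ℝ := Ioo (L.a i) (L.b i)

/-- The union of the intervals of the list. -/
def union (L : LinkedList) : Set ℝ := ⋃ i ∈ L.S, L.interval i

/-- The list has a least element. -/
def HasLeast (L : LinkedList) : Prop := ∃ i ∈ L.S, ∀ j ∈ L.S, i ≤ j

/-- The list has a greatest element. -/
def HasGreatest (L : LinkedList) : Prop := ∃ i ∈ L.S, ∀ j ∈ L.S, j ≤ i

end LinkedList

/-- `P` is a collection of nonempty bounded open intervals of `ℝ`. -/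
def IsIntervalCollection (P : Set (Set ℝ)) : Prop :=
  ∀ J ∈ P, ∃ c d : ℝ, c < d ∧ J = Ioo c d

/-- An interval is dominated by `P` if it is contained in some member of `P`. -/
def Dominated (P : Set (Set ℝ)) (J : Set ℝ) : Prop := ∃ K ∈ P, J ⊆ K

/-- An interval is approximately dominated by `P` if it is the union of an increasing
sequence of intervals, each dominated by `P`. -/
def ApproxDominated (P : Set (Set ℝ)) (J : Set ℝ) : Prop :=
  ∃ c d : ℕ → ℝ, (∀ n, c n < d n) ∧
    (∀ n, Ioo (c n) (d n) ⊆ Ioo (c (n + 1)) (d (n + 1))) ∧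
    (∀ n, Dominated P (Ioo (c n) (d n))) ∧ J = ⋃ n, Ioo (c n) (d n)

/-- An inner cover of `(x, y)` with respect to `P`: a linked list with union `(x, y)`, each of
whose intervals is approximately dominated by `P`. -/
def IsInnerCover (P : Set (Set ℝ)) (x y : ℝ) (L : LinkedList) : Prop :=
  L.union = Ioo x y ∧ ∀ i ∈ L.S, ApproxDominated P (L.interval i)

/-- An outer cover of `(x, y)` with respect to `P`: a linked list with union `(x, y)` such that
every member of `P` is contained in some interval of the list. -/
def IsOuterCover (P : Set (Set ℝ)) (x y : ℝ) (L : LinkedList) : Prop :=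
  L.union = Ioo x y ∧ ∀ J ∈ P, ∃ i ∈ L.S, J ⊆ L.interval i

/-- `L_P(x)`: the infimum of left endpoints of members of `P` containing `x`. -/
noncomputable def leftEnd (P : Set (Set ℝ)) (x : ℝ) : ℝ :=
  sInf {c | ∃ d, Ioo c d ∈ P ∧ x ∈ Ioo c d}

/-- `R_P(x)`: the supremum of right endpoints of members of `P` containing `x`. -/
noncomputable def rightEnd (P : Set (Set ℝ)) (x : ℝ) : ℝ :=
  sSup {d | ∃ c, Ioo c d ∈ P ∧ x ∈ Ioo c d}

theorem aux_left (P : Set (Set ℝ)) (a b : ℝ) (hU : ⋃₀ P = Ioo a b) (hP : IsIntervalCollection P)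
    (x : ℝ) (hx : x ∈ Ioo a b) (hLx : leftEnd P x = a) : ApproxDominated P (Ioo a x) := by
  have hx1 : 0 < x - a := sub_pos.2 hx.1
  refine ⟨fun n => a + (x - a) / (n + 2), fun _ => x, ?_, ?_, ?_, ?_⟩
  · intro n
    have : (x - a) / ((n : ℝ) + 2) < x - a := div_lt_self hx1 (by linarith [n.cast_nonneg (α := ℝ)])
    show a + (x - a) / ((n : ℝ) + 2) < x
    linarith
  · intro n
    apply Ioo_subset_Ioo_left
    push_cast
    gcongr
    linarith
  · intro n
    have hpos : 0 < (x - a) / ((n : ℝ) + 2) := by positivity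
    have hne : {c | ∃ d, Ioo c d ∈ P ∧ x ∈ Ioo c d}.Nonempty := by
      have : x ∈ ⋃₀ P := hU ▸ hx
      obtain ⟨J, hJ, hxJ⟩ := this
      obtain ⟨c, d, _, rfl⟩ := hP J hJ
      exact ⟨c, d, hJ, hxJ⟩
    obtain ⟨c, ⟨d, hcd, hxc⟩, hc⟩ := exists_lt_of_csInf_lt hne
      (show sInf _ < a + (x - a) / ((n : ℝ) + 2) by
        change leftEnd P x < _
        linarith)
    exact ⟨_, hcd, Ioo_subset_Ioo hc.le hxc.2.le⟩
  · ext t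
    simp only [mem_iUnion, mem_Ioo]
    constructor
    · rintro ⟨h1, h2⟩
      obtain ⟨n, hn⟩ := exists_nat_gt ((x - a) / (t - a))
      have ht : 0 < t - a := by linarith
      refine ⟨n, ?_, h2⟩
      have : (x - a) / ((n : ℝ) + 2) < t - a := by
        rw [div_lt_iff₀ ht] at hn
        rw [div_lt_iff₀ (by positivity)]
        nlinarith
      linarith
    · rintro ⟨n, h1, h2⟩
      have hpos : 0 < (x - a) / ((n : ℝ) + 2) := by positivity
      exact ⟨by linarith, h2⟩

theorem aux_right (P : Set (Set ℝ)) (a b : ℝ) (hU : ⋃₀ P = Ioo a b) (hP : IsIntervalCollection P)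
    (y : ℝ) (hy : y ∈ Ioo a b) (hRy : rightEnd P y = b) (z : ℝ) (hyz : y ≤ z) (hz : z < b) :
    ApproxDominated P (Ioo z b) := by
  have hx1 : 0 < b - z := sub_pos.2 hz
  refine ⟨fun _ => z, fun n => b - (b - z) / (n + 2), ?_, ?_, ?_, ?_⟩
  · intro n
    have : (b - z) / ((n : ℝ) + 2) < b - z := div_lt_self hx1 (by linarith [n.cast_nonneg (α := ℝ)])
    show z < b - (b - z) / ((n : ℝ) + 2)
    linarith
  · intro n
    apply Ioo_subset_Ioo_right
    push_cast
    gcongr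
    linarith
  · intro n
    have hpos : 0 < (b - z) / ((n : ℝ) + 2) := by positivity
    have hne : {d | ∃ c, Ioo c d ∈ P ∧ y ∈ Ioo c d}.Nonempty := by
      have : y ∈ ⋃₀ P := hU ▸ hy
      obtain ⟨J, hJ, hxJ⟩ := this
      obtain ⟨c, d, _, rfl⟩ := hP J hJ
      exact ⟨d, c, hJ, hxJ⟩
    obtain ⟨d, ⟨c, hcd, hxc⟩, hc⟩ := exists_lt_of_lt_csSup hne
      (show b - (b - z) / ((n : ℝ) + 2) < sSup _ by
        change _ < rightEnd P y
        linarith)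
    exact ⟨_, hcd, Ioo_subset_Ioo (hxc.1.le.trans hyz) hc.le⟩
  · ext t
    simp only [mem_iUnion, mem_Ioo]
    constructor
    · rintro ⟨h1, h2⟩
      obtain ⟨n, hn⟩ := exists_nat_gt ((b - z) / (b - t))
      have ht : 0 < b - t := by linarith
      refine ⟨n, h1, ?_⟩
      have : (b - z) / ((n : ℝ) + 2) < b - t := by
        rw [div_lt_iff₀ ht] at hn
        rw [div_lt_iff₀ (by positivity)]
        nlinarith
      linarith
    · rintro ⟨n, h1, h2⟩
      have hpos : 0 < (b - z) / ((n : ℝ) + 2) := by positivity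
      exact ⟨h1, by linarith⟩

theorem aux_step (x y ε : ℝ) (hxy : x < y) (hε : 0 < ε) :
    ∃ (n : ℤ) (h : ℝ), 1 ≤ n ∧ 0 < h ∧ h < ε ∧ x + n * h - h / 2 = y := by
  obtain ⟨m, hm⟩ := exists_nat_gt ((y - x) / ε)
  have h0 : 0 < y - x := sub_pos.2 hxy
  have hd : 0 < (m : ℝ) + 1 / 2 := by positivity
  refine ⟨m + 1, (y - x) / (m + 1 / 2), by omega, by positivity, ?_, ?_⟩
  · rw [div_lt_iff₀ hε] at hm
    rw [div_lt_iff₀ hd]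
    nlinarith
  · push_cast
    field_simp
    ring

/-- For `⋃₀ P = (a, b)`: if there are `x, y ∈ (a, b)` with `L_P(x) = a` and
`R_P(y) = b`, then `(a, b)` admits a finite inner cover with respect to `P`. -/
theorem stmt14 (P : Set (Set ℝ)) (a b : ℝ) (hab : a < b)
    (hP : IsIntervalCollection P) (hU : ⋃₀ P = Ioo a b)
    (x y : ℝ) (hx : x ∈ Ioo a b) (hy : y ∈ Ioo a b)
    (hLx : leftEnd P x = a) (hRy : rightEnd P y = b) :
    ∃ L : LinkedList, IsInnerCover P a b L ∧ L.S.Finite := by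
  obtain ⟨z, hyz, hxz, hzb⟩ : ∃ z, y ≤ z ∧ x < z ∧ z < b := by
    obtain ⟨z, h1, h2⟩ := exists_between (max_lt hx.2 hy.2)
    exact ⟨z, ((le_max_right _ _).trans_lt h1).le, (le_max_left _ _).trans_lt h1, h2⟩
  have hl := aux_left P a b hU hP x hx hLx
  have hr := aux_right P a b hU hP y hy hRy z hyz hzb
  have hax := hx.1
  obtain ⟨δ, hδ, hleb⟩ := lebesgue_number_lemma_of_metric_sUnion (s := Icc x z) (c := P)
    isCompact_Icc (fun t ht => by obtain ⟨c, d, _, rfl⟩ := hP t ht; exact isOpen_Ioo)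
    (by rw [hU]; exact fun t ht => ⟨hax.trans_le ht.1, ht.2.trans_lt hzb⟩)
  obtain ⟨n, h, hn, h0, hlt, hz⟩ := aux_step x z (min δ (min (x - a) (b - z))) hxz
    (by simp only [lt_min_iff]; exact ⟨hδ, by linarith, by linarith⟩)
  simp only [lt_min_iff] at hlt
  obtain ⟨h1, h2, h3⟩ := hlt
  have key : ∀ i j : ℤ, i ≤ j → (i : ℝ) * h ≤ j * h := fun i j hij => by
    have : (i : ℝ) ≤ j := by exact_mod_cast hij
    gcongr
  let A : ℤ → ℝ := fun i => if i ≤ 0 then a else x + (i - 1) * h - h / 2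
  let B : ℤ → ℝ := fun i => if n + 1 ≤ i then b else x + i * h
  have A0 : ∀ i, i ≤ 0 → A i = a := fun i hi => if_pos hi
  have A1 : ∀ i, 0 < i → A i = x + (i - 1) * h - h / 2 := fun i hi => if_neg (by omega)
  have B0 : ∀ i, n + 1 ≤ i → B i = b := fun i hi => if_pos hi
  have B1 : ∀ i, i ≤ n → B i = x + i * h := fun i hi => if_neg (by omega)
  have hlt : ∀ i ∈ Icc (0 : ℤ) (n + 1), A i < B i := by
    rintro i ⟨hi0, hi1⟩
    rcases hi0.eq_or_lt with rfl | hi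
    · rw [A0 _ le_rfl, B1 _ (by omega)]; simpa using hax
    · rw [A1 _ hi]
      rcases hi1.eq_or_lt with rfl | hi'
      · rw [B0 _ le_rfl]; push_cast; linarith
      · rw [B1 _ (by omega)]; linarith
  let L : LinkedList :=
    { S := Icc 0 (n + 1)
      nonempty := ⟨0, by simp; omega⟩
      consecutive := fun i hi k hk j hij hjk => ⟨hi.1.trans hij, hjk.trans hk.2⟩
      a := A
      b := B
      lt := hlt
      mono_a := by
        rintro i ⟨hi0, hi1⟩ ⟨hj0, hj1⟩
        rw [A1 (i + 1) (by omega)]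
        rcases hi0.eq_or_lt with rfl | hi
        · rw [A0 _ le_rfl]; push_cast; linarith
        · rw [A1 _ hi]; push_cast; linarith
      mono_b := by
        rintro i ⟨hi0, hi1⟩ ⟨hj0, hj1⟩
        rw [B1 i (by omega)]
        rcases hj1.eq_or_lt with hi | hi
        · rw [B0 _ (by omega)]
          obtain rfl : i = n := by omega
          linarith
        · rw [B1 _ (by omega)]; push_cast; linarith
      overlap := by
        rintro i ⟨hi0, hi1⟩ ⟨hj0, hj1⟩
        rw [B1 i (by omega), A1 _ (by omega)]; push_cast; linarith
      gap := by
        rintro i ⟨hi0, hi1⟩ ⟨hj0, hj1⟩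
        rw [B1 i (by omega), A1 _ (by omega)]; push_cast; linarith }
  refine ⟨L, ⟨?_, ?_⟩, finite_Icc _ _⟩
  · ext t
    simp only [LinkedList.union, LinkedList.interval, mem_iUnion, L, exists_prop]
    constructor
    · rintro ⟨i, ⟨hi0, hi1⟩, ht1, ht2⟩
      constructor
      · refine lt_of_le_of_lt ?_ ht1
        rcases hi0.eq_or_lt with rfl | hi
        · rw [A0 _ le_rfl]
        · rw [A1 _ hi]
          have := key 1 i (by omega)
          push_cast at this
          linarith
      · refine lt_of_lt_of_le ht2 ?_
        rcases hi1.eq_or_lt with rfl | hi'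
        · rw [B0 _ le_rfl]
        · rw [B1 _ (by omega)]
          have := key i n (by omega)
          linarith
    · rintro ⟨ht1, ht2⟩
      rcases lt_or_ge t x with htx | htx
      · refine ⟨0, ⟨le_rfl, by omega⟩, ?_, ?_⟩
        · rwa [A0 _ le_rfl]
        · rw [B1 _ (by omega)]; simpa using htx
      rcases lt_or_ge z t with htz | htz
      · refine ⟨n + 1, ⟨by omega, le_rfl⟩, ?_, ?_⟩
        · rw [A1 _ (by omega)]; push_cast; linarith
        · rwa [B0 _ le_rfl]
      have hf1 := Int.floor_le ((t - x) / h)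
      have hf2 := Int.lt_floor_add_one ((t - x) / h)
      have hf0 : 0 ≤ ⌊(t - x) / h⌋ := Int.floor_nonneg.2 (div_nonneg (by linarith) h0.le)
      generalize ⌊(t - x) / h⌋ = k at *
      rw [le_div_iff₀ h0] at hf1
      rw [div_lt_iff₀ h0] at hf2
      have hkn : k < n := by
        by_contra hc
        have := key n k (by omega)
        linarith
      refine ⟨k + 1, ⟨by omega, by omega⟩, ?_, ?_⟩
      · rw [A1 _ (by omega)]; push_cast; linarith
      · rw [B1 _ (by omega)]; push_cast; linarith
  · rintro i ⟨hi0, hi1⟩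
    show ApproxDominated P (Ioo (A i) (B i))
    have hlti := hlt i ⟨hi0, hi1⟩
    rcases hi0.eq_or_lt with rfl | hi
    · rw [A0 _ le_rfl, B1 _ (by omega)]; simpa using hl
    rcases hi1.eq_or_lt with rfl | hi'
    · rw [B0 _ le_rfl, A1 _ hi]
      have : x + (((n + 1 : ℤ) : ℝ) - 1) * h - h / 2 = z := by push_cast; linarith
      rw [this]; exact hr
    have k1 := key 1 i (by omega)
    have k2 := key i n (by omega)
    push_cast at k1
    obtain ⟨K, hK, hsub⟩ := hleb (x + (i - 1) * h) ⟨by linarith, by linarith⟩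
    refine ⟨fun _ => A i, fun _ => B i, fun _ => hlti, fun _ => subset_rfl, fun _ => ⟨K, hK, ?_⟩,
      (iUnion_const _).symm⟩
    refine Subset.trans ?_ hsub
    rw [Real.ball_eq_Ioo, A1 _ hi, B1 _ (by omega)]
    apply Ioo_subset_Ioo <;> linarith
end

section
/- Let P be a collection of nonempty bounded open intervals of ℝ with ∪P ⊆ (a,b) for real numbers a < b. Suppose that L_P(x) > a and R_P(x) < b for every x ∈ ∪P. Then there exists an outer cover of (a,b) with respect to P that has no greatest element and no least element. -/
open Set

/-- A suitable bi-infinite sequence of points gives the outer cover. -/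
theorem outer_of_seq (P : Set (Set ℝ)) (a b : ℝ)
    (hP : IsIntervalCollection P) (hU : ⋃₀ P ⊆ Ioo a b)
    (t : ℤ → ℝ) (ht : StrictMono t) (hta : ∀ n, a < t n) (htb : ∀ n, t n < b)
    (hca : ∀ x, a < x → ∃ n, t n < x) (hcb : ∀ x, x < b → ∃ n, x < t n)
    (hJ : ∀ J ∈ P, ∀ n, t n ∈ J → t (n + 1) ∉ J) :
    ∃ L : LinkedList, IsOuterCover P a b L ∧ ¬L.HasLeast ∧ ¬L.HasGreatest := by
  have floor : ∀ x ∈ Ioo a b, ∃ j, t j ≤ x ∧ x < t (j + 1) := by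
    intro x hx
    obtain ⟨n, hn⟩ := hca x hx.1
    obtain ⟨m, hm⟩ := hcb x hx.2
    obtain ⟨j, hj, hj'⟩ := Int.exists_greatest_of_bdd (P := fun j => t j ≤ x)
      ⟨m, fun z hz => ht.le_iff_le.1 (le_of_lt (lt_of_le_of_lt hz hm))⟩ ⟨n, hn.le⟩
    refine ⟨j, hj, ?_⟩
    by_contra hc
    have := hj' (j + 1) (not_lt.1 hc)
    omega
  refine ⟨⟨univ, univ_nonempty, fun _ _ _ _ _ _ _ => mem_univ _, fun i => t (2 * i),
    fun i => t (2 * i + 3), fun i _ => ht (by omega), fun i _ _ => ht (by omega),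
    fun i _ _ => ht (by omega), fun i _ _ => ht (by omega), fun i _ _ => ht (by omega)⟩,
    ⟨?_, ?_⟩, ?_, ?_⟩
  · ext x
    simp only [LinkedList.union, LinkedList.interval, mem_univ, iUnion_true, mem_iUnion]
    constructor
    · rintro ⟨i, h1, h2⟩
      exact ⟨(hta _).trans h1, h2.trans (htb _)⟩
    · intro hx
      obtain ⟨j, h1, h2⟩ := floor x hx
      obtain ⟨i, hi | hi⟩ := Int.even_or_odd' j
      · exact ⟨i - 1, (ht (by omega)).trans_le h1, h2.trans_le (ht.monotone (by omega))⟩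
      · exact ⟨i, (ht (by omega)).trans_le h1, h2.trans (ht (by omega))⟩
  · intro J hJP
    suffices hs : ∃ j, J ⊆ Ioo (t j) (t (j + 2)) by
      obtain ⟨j, hj⟩ := hs
      obtain ⟨i, hi⟩ := Int.even_or_odd' j
      exact ⟨i, mem_univ _, hj.trans
        (Ioo_subset_Ioo (ht.monotone (by omega)) (ht.monotone (by omega)))⟩
    obtain ⟨c, d, hcd, rfl⟩ := hP J hJP
    obtain ⟨x, hx⟩ := nonempty_Ioo.2 hcd
    obtain ⟨j, h1, h2⟩ := floor x (hU ⟨_, hJP, hx⟩)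
    have lo : ∀ k, t k ≤ x → t k ∉ Ioo c d → t k ≤ c := fun k hk hn => by
      by_contra hc
      exact hn ⟨not_le.1 hc, hk.trans_lt hx.2⟩
    have hi : ∀ k, x ≤ t k → t k ∉ Ioo c d → d ≤ t k := fun k hk hn => by
      by_contra hc
      exact hn ⟨hx.1.trans_le hk, not_le.1 hc⟩
    by_cases hj : t j ∈ Ioo c d
    · have h3 := hJ _ hJP j hj
      have h4 : t (j - 1) ∉ Ioo c d := fun h5 => hJ _ hJP (j - 1) h5 (by simpa using hj)
      refine ⟨j - 1, Ioo_subset_Ioo (lo _ ((ht.monotone (by omega)).trans h1) h4) ?_⟩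
      have := hi _ h2.le h3
      rwa [show j - 1 + 2 = j + 1 by ring]
    · refine ⟨j, Ioo_subset_Ioo (lo _ h1 hj) ?_⟩
      by_cases h3 : t (j + 1) ∈ Ioo c d
      · have h4 := hJ _ hJP _ h3
        rw [show j + 1 + 1 = j + 2 by ring] at h4
        exact hi _ (h2.le.trans (ht.monotone (by omega))) h4
      · exact (hi _ h2.le h3).trans (ht.monotone (by omega))
  · rintro ⟨i, -, hi⟩
    have := hi (i - 1) (mem_univ _)
    omega
  · rintro ⟨i, -, hi⟩
    have := hi (i + 1) (mem_univ _)
    omega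

/-- Geometric approach of an iterated sequence to a limit point. -/
theorem small_of_half (u : ℕ → ℝ) (hu : ∀ n, u (n + 1) ≤ u n / 2) (e : ℝ) (he : 0 < e) :
    ∃ n, u n < e := by
  have h1 : ∀ n, u n ≤ (|u 0| + 1) * (1 / 2) ^ n := by
    intro n
    induction n with
    | zero => simp; linarith [le_abs_self (u 0)]
    | succ n ih => have := hu n; rw [pow_succ]; linarith
  have hp : 0 < |u 0| + 1 := by positivity
  obtain ⟨n, hn⟩ := exists_pow_lt_of_lt_one (div_pos he hp) (by norm_num : (1 / 2 : ℝ) < 1)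
  refine ⟨n, (h1 n).trans_lt ?_⟩
  rw [lt_div_iff₀ hp] at hn
  linarith

/-- For `⋃₀ P ⊆ (a, b)`: if `L_P(x) > a` and `R_P(x) < b` for every
`x ∈ ⋃₀ P`, then there is an outer cover of `(a, b)` with respect to `P` having no greatest
and no least element. -/
theorem stmt15 (P : Set (Set ℝ)) (a b : ℝ) (hab : a < b)
    (hP : IsIntervalCollection P) (hU : ⋃₀ P ⊆ Ioo a b)
    (h : ∀ x ∈ ⋃₀ P, a < leftEnd P x ∧ rightEnd P x < b) :
    ∃ L : LinkedList, IsOuterCover P a b L ∧ ¬L.HasLeast ∧ ¬L.HasGreatest := by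
  have hsub : ∀ c d : ℝ, Ioo c d ∈ P → c < d → a ≤ c ∧ d ≤ b := fun c d hcd hlt =>
    (Ioo_subset_Ioo_iff hlt).1 ((subset_sUnion_of_mem hcd).trans hU)
  have hf : ∀ x : Ioo a b, ∃ y : Ioo a b, (x : ℝ) < y ∧ b - y ≤ (b - x) / 2 ∧
      ∀ J ∈ P, (x : ℝ) ∈ J → (y : ℝ) ∉ J := by
    rintro ⟨x, hx⟩
    have key : ∃ r < b, ∀ J ∈ P, x ∈ J → ∀ y ∈ J, y < r := by
      by_cases hxU : x ∈ ⋃₀ P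
      · refine ⟨_, (h x hxU).2, ?_⟩
        intro J hJ hxJ y hy
        obtain ⟨c, d, hcd, rfl⟩ := hP J hJ
        refine hy.2.trans_le (le_csSup ⟨b, ?_⟩ ⟨c, hJ, hxJ⟩)
        rintro d' ⟨c', h1, h2⟩
        exact (hsub _ _ h1 (h2.1.trans h2.2)).2
      · exact ⟨x, hx.2, fun J hJ hxJ => (hxU ⟨J, hJ, hxJ⟩).elim⟩
    obtain ⟨r, hr, hr'⟩ := key
    have h1 := hx.1
    have h2 := hx.2
    have h3 := le_max_left r ((x + b) / 2)
    have h4 := le_max_right r ((x + b) / 2)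
    refine ⟨⟨max r ((x + b) / 2), by linarith, max_lt hr (by linarith)⟩, ?_, ?_, ?_⟩
    · show x < max r ((x + b) / 2)
      linarith
    · show b - max r ((x + b) / 2) ≤ (b - x) / 2
      linarith
    · intro J hJ hxJ hy
      exact absurd (hr' J hJ hxJ _ hy) (not_lt.2 h3)
  have hg : ∀ x : Ioo a b, ∃ y : Ioo a b, (y : ℝ) < x ∧ y - a ≤ (x - a) / 2 ∧
      ∀ J ∈ P, (x : ℝ) ∈ J → (y : ℝ) ∉ J := by
    rintro ⟨x, hx⟩
    have key : ∃ r > a, ∀ J ∈ P, x ∈ J → ∀ y ∈ J, r < y := by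
      by_cases hxU : x ∈ ⋃₀ P
      · refine ⟨_, (h x hxU).1, ?_⟩
        intro J hJ hxJ y hy
        obtain ⟨c, d, hcd, rfl⟩ := hP J hJ
        refine lt_of_le_of_lt (csInf_le ⟨a, ?_⟩ ⟨d, hJ, hxJ⟩) hy.1
        rintro c' ⟨d', h1, h2⟩
        exact (hsub _ _ h1 (h2.1.trans h2.2)).1
      · exact ⟨x, hx.1, fun J hJ hxJ => (hxU ⟨J, hJ, hxJ⟩).elim⟩
    obtain ⟨r, hr, hr'⟩ := key
    have h1 := hx.1
    have h2 := hx.2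
    have h3 := min_le_left r ((x + a) / 2)
    have h4 := min_le_right r ((x + a) / 2)
    refine ⟨⟨min r ((x + a) / 2), lt_min hr (by linarith), by linarith⟩, ?_, ?_, ?_⟩
    · show min r ((x + a) / 2) < x
      linarith
    · show min r ((x + a) / 2) - a ≤ (x - a) / 2
      linarith
    · intro J hJ hxJ hy
      exact absurd (hr' J hJ hxJ _ hy) (not_lt.2 h3)
  choose f hf1 hf2 hf3 using hf
  choose g hg1 hg2 hg3 using hg
  obtain ⟨m, hm⟩ := nonempty_Ioo.2 hab
  let t : ℤ → Ioo a b := fun n => match n with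
    | Int.ofNat k => f^[k] ⟨m, hm⟩
    | Int.negSucc k => g^[k + 1] ⟨m, hm⟩
  have tpos : ∀ k : ℕ, t ((k : ℤ) + 1) = f (t k) := fun k =>
    Function.iterate_succ_apply' f k _
  have tneg : ∀ k : ℕ, t (-((k : ℤ) + 1)) = g (t (-(k : ℤ))) := by
    intro k
    have e : ∀ k : ℕ, t (-(k : ℤ)) = g^[k] ⟨m, hm⟩ := by
      intro k
      cases k with
      | zero => rfl
      | succ k => rfl
    have := e (k + 1)
    push_cast at this
    rw [this, e k, Function.iterate_succ_apply']
  have step : ∀ n : ℤ, t (n + 1) = f (t n) ∨ t n = g (t (n + 1)) := by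
    intro n
    rcases le_or_gt 0 n with hn | hn
    · obtain ⟨k, rfl⟩ := Int.eq_ofNat_of_zero_le hn
      exact Or.inl (tpos k)
    · obtain ⟨k, hk⟩ := Int.eq_ofNat_of_zero_le (show 0 ≤ -n - 1 by omega)
      right
      have h1 := tneg k
      rwa [show -((k : ℤ) + 1) = n by omega, show -(k : ℤ) = n + 1 by omega] at h1
  refine outer_of_seq P a b hP hU (fun n => (t n : ℝ)) ?_ (fun n => (t n).2.1)
    (fun n => (t n).2.2) ?_ ?_ ?_
  · refine strictMono_int_of_lt_succ fun n => ?_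
    rcases step n with h1 | h1
    · rw [h1]; exact hf1 _
    · rw [h1]; exact hg1 _
  · intro x hx
    obtain ⟨n, hn⟩ := small_of_half (fun k : ℕ => (t (-(k : ℤ)) : ℝ) - a) (fun k => by
      have := hg2 (t (-(k : ℤ)))
      rw [← tneg k] at this
      simpa using this) (x - a) (by linarith)
    exact ⟨-(n : ℤ), by simpa using hn⟩
  · intro x hx
    obtain ⟨n, hn⟩ := small_of_half (fun k : ℕ => b - (t (k : ℤ) : ℝ)) (fun k => by
      have := hf2 (t (k : ℤ))
      rw [← tpos k] at this
      simpa using this) (b - x) (by linarith)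
    exact ⟨(n : ℤ), by simpa using hn⟩
  · intro J hJ n h1 h2
    rcases step n with h3 | h3
    · rw [h3] at h2
      exact hf3 _ J hJ h1 h2
    · rw [h3] at h1
      exact hg3 _ J hJ h2 h1
end

section
/- Let P be a collection of nonempty bounded open intervals of ℝ with ∪P ⊆ (a,b) for real numbers a < b. Then the following are equivalent: (1) there is no outer cover of (a,b) with respect to P consisting of exactly two intervals; (2) ∪P = (a,b) and there is an inner cover of (a,b) with respect to P consisting of a single interval; (3) every interval (c,d) with a < c < d < b is dominated by P. -/
open Set

theorem aux_one_three (P : Set (Set ℝ)) (a b : ℝ)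
    (hP : IsIntervalCollection P) (hU : ⋃₀ P ⊆ Ioo a b)
    (h : ¬∃ L : LinkedList, IsOuterCover P a b L ∧ L.S.ncard = 2) :
    ∀ c d : ℝ, a < c → c < d → d < b → Dominated P (Ioo c d) := by
  intro c d hac hcd hdb
  by_contra hdom
  apply h
  let L : LinkedList :=
    { S := {0, 1}
      nonempty := ⟨0, by simp⟩
      consecutive := by
        intro i hi k hk j hij hjk
        simp only [mem_insert_iff, mem_singleton_iff] at *
        omega
      a := fun i => if i = 0 then a else c
      b := fun i => if i = 0 then d else b
      lt := by
        intro i hi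
        simp only [mem_insert_iff, mem_singleton_iff] at hi
        rcases hi with rfl | rfl
        · simp; linarith
        · simp; linarith
      mono_a := by
        intro i hi hi'
        simp only [mem_insert_iff, mem_singleton_iff] at hi hi'
        obtain rfl : i = 0 := by omega
        simpa using hac
      mono_b := by
        intro i hi hi'
        simp only [mem_insert_iff, mem_singleton_iff] at hi hi'
        obtain rfl : i = 0 := by omega
        simpa using hdb
      overlap := by
        intro i hi hi'
        simp only [mem_insert_iff, mem_singleton_iff] at hi hi'
        obtain rfl : i = 0 := by omega
        simpa using hcd
      gap := by
        intro i hi hi'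
        simp only [mem_insert_iff, mem_singleton_iff] at hi hi'
        omega }
  have h0 : L.interval 0 = Ioo a d := by simp [L, LinkedList.interval]
  have h1 : L.interval 1 = Ioo c b := by simp [L, LinkedList.interval]
  have hS : L.S = {0, 1} := rfl
  refine ⟨L, ⟨?_, ?_⟩, ?_⟩
  · rw [LinkedList.union, hS, biUnion_pair, h0, h1]
    ext x
    simp only [mem_union, mem_Ioo]
    constructor
    · rintro (⟨h, h'⟩ | ⟨h, h'⟩) <;> constructor <;> linarith
    · rintro ⟨h, h'⟩
      rcases lt_or_ge x d with hx | hx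
      · exact Or.inl ⟨h, hx⟩
      · exact Or.inr ⟨by linarith, h'⟩
  · intro J hJ
    obtain ⟨x, y, hxy, rfl⟩ := hP J hJ
    have hsub : Ioo x y ⊆ Ioo a b := (subset_sUnion_of_mem hJ).trans hU
    obtain ⟨hx, hy⟩ := (Ioo_subset_Ioo_iff hxy).1 hsub
    rcases le_or_gt y d with hyd | hyd
    · exact ⟨0, by simp [hS], h0 ▸ Ioo_subset_Ioo hx hyd⟩
    · rcases le_or_gt c x with hcx | hcx
      · exact ⟨1, by simp [hS], h1 ▸ Ioo_subset_Ioo hcx hy⟩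
      · exact absurd ⟨_, hJ, Ioo_subset_Ioo hcx.le hyd.le⟩ hdom
  · rw [hS]
    exact ncard_pair (by norm_num)

theorem aux_three_one (P : Set (Set ℝ)) (a b : ℝ)
    (h : ∀ c d : ℝ, a < c → c < d → d < b → Dominated P (Ioo c d)) :
    ¬∃ L : LinkedList, IsOuterCover P a b L ∧ L.S.ncard = 2 := by
  rintro ⟨L, ⟨hun, hc⟩, hcard⟩
  obtain ⟨i, hS⟩ : ∃ i : ℤ, L.S = {i, i + 1} := by
    obtain ⟨x, y, hne, hS⟩ := ncard_eq_two.1 hcard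
    have hx : x ∈ L.S := by simp [hS]
    have hy : y ∈ L.S := by simp [hS]
    rcases lt_or_gt_of_ne hne with hlt | hlt
    · have := L.consecutive x hx y hy (x + 1) (by omega) (by omega)
      rw [hS] at this
      simp only [mem_insert_iff, mem_singleton_iff] at this
      obtain rfl : x + 1 = y := by omega
      exact ⟨x, hS⟩
    · have := L.consecutive y hy x hx (y + 1) (by omega) (by omega)
      rw [hS] at this
      simp only [mem_insert_iff, mem_singleton_iff] at this
      obtain rfl : y + 1 = x := by omega
      exact ⟨y, by rw [hS, pair_comm]⟩
  have hi : i ∈ L.S := by simp [hS]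
  have hi' : i + 1 ∈ L.S := by simp [hS]
  have hsub : ∀ j ∈ L.S, a ≤ L.a j ∧ L.b j ≤ b := by
    intro j hj
    have : Ioo (L.a j) (L.b j) ⊆ Ioo a b := by
      rw [← hun]
      exact subset_biUnion_of_mem (u := fun j => L.interval j) hj
    exact (Ioo_subset_Ioo_iff (L.lt j hj)).1 this
  have ha := (hsub i hi).1
  have hb := (hsub _ hi').2
  have h1 := L.mono_a i hi hi'
  have h2 := L.mono_b i hi hi'
  have h3 := L.overlap i hi hi'
  obtain ⟨c, hc1, hc2⟩ := exists_between (ha.trans_lt h1)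
  obtain ⟨d, hd1, hd2⟩ := exists_between (h2.trans_le hb)
  have hcd : c < d := by linarith
  obtain ⟨K, hK, hsubK⟩ := h c d hc1 hcd hd2
  obtain ⟨j, hj, hKj⟩ := hc K hK
  obtain ⟨h4, h5⟩ := (Ioo_subset_Ioo_iff hcd).1 (hsubK.trans hKj)
  rw [hS] at hj
  rcases hj with rfl | hj
  · linarith
  · rw [mem_singleton_iff] at hj
    subst hj
    linarith

theorem aux_three_two (P : Set (Set ℝ)) (a b : ℝ) (hab : a < b) (hU : ⋃₀ P ⊆ Ioo a b)
    (h : ∀ c d : ℝ, a < c → c < d → d < b → Dominated P (Ioo c d)) :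
    ⋃₀ P = Ioo a b ∧ ∃ L : LinkedList, IsInnerCover P a b L ∧ L.S.ncard = 1 := by
  refine ⟨hU.antisymm ?_, ?_⟩
  · rintro x ⟨hx, hx'⟩
    obtain ⟨c, hc1, hc2⟩ := exists_between hx
    obtain ⟨d, hd1, hd2⟩ := exists_between hx'
    obtain ⟨K, hK, hs⟩ := h c d hc1 (hc2.trans hd1) hd2
    exact ⟨K, hK, hs ⟨hc2, hd1⟩⟩
  · let L : LinkedList :=
      { S := {0}
        nonempty := ⟨0, by simp⟩
        consecutive := by
          intro i hi k hk j hij hjk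
          simp only [mem_singleton_iff] at *
          omega
        a := fun _ => a
        b := fun _ => b
        lt := fun _ _ => hab
        mono_a := by
          intro i hi hi'
          simp only [mem_singleton_iff] at hi hi'
          omega
        mono_b := by
          intro i hi hi'
          simp only [mem_singleton_iff] at hi hi'
          omega
        overlap := by
          intro i hi hi'
          simp only [mem_singleton_iff] at hi hi'
          omega
        gap := by
          intro i hi hi'
          simp only [mem_singleton_iff] at hi hi'
          omega }
    have hint : ∀ i, L.interval i = Ioo a b := fun i => rfl
    have hS : L.S = {0} := rfl
    refine ⟨L, ⟨?_, ?_⟩, by rw [hS, ncard_singleton]⟩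
    · rw [LinkedList.union, hS, biUnion_singleton, hint]
    · intro i _
      rw [hint]
      have hba : 0 < b - a := sub_pos.2 hab
      have hpos : ∀ n : ℕ, 0 < (b - a) / (n + 3) := fun n => by positivity
      have hlt : ∀ n : ℕ, (b - a) / ((n : ℝ) + 3) < (b - a) / 2 := fun n =>
        div_lt_div_of_pos_left hba (by norm_num) (by linarith [n.cast_nonneg (α := ℝ)])
      have hanti : ∀ n : ℕ, (b - a) / (((n + 1 : ℕ) : ℝ) + 3) ≤ (b - a) / ((n : ℝ) + 3) :=
        fun n => div_le_div_of_nonneg_left hba.le (by positivity) (by push_cast; linarith)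
      have harch : ∀ e : ℝ, 0 < e → ∃ n : ℕ, (b - a) / ((n : ℝ) + 3) < e := by
        intro e he
        obtain ⟨n, hn⟩ := exists_nat_gt ((b - a) / e)
        refine ⟨n, ?_⟩
        rw [div_lt_iff₀ he] at hn
        rw [div_lt_iff₀ (by positivity)]
        nlinarith
      have hcd : ∀ n : ℕ, a + (b - a) / ((n : ℝ) + 3) < b - (b - a) / ((n : ℝ) + 3) := fun n => by
        linarith [hlt n]
      refine ⟨fun n => a + (b - a) / (n + 3), fun n => b - (b - a) / (n + 3), hcd, ?_, ?_, ?_⟩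
      · intro n
        exact Ioo_subset_Ioo (by linarith [hanti n]) (by linarith [hanti n])
      · intro n
        exact h _ _ (by linarith [hpos n]) (hcd n) (by linarith [hpos n])
      · ext x
        simp only [mem_iUnion, mem_Ioo]
        constructor
        · rintro ⟨hx, hx'⟩
          obtain ⟨n, hn⟩ := harch (min (x - a) (b - x)) (lt_min (by linarith) (by linarith))
          obtain ⟨h1, h2⟩ := lt_min_iff.1 hn
          exact ⟨n, by linarith, by linarith⟩
        · rintro ⟨n, h1, h2⟩
          exact ⟨by linarith [hpos n], by linarith [hpos n]⟩

theorem aux_two_three (P : Set (Set ℝ)) (a b : ℝ)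
    (h : ∃ L : LinkedList, IsInnerCover P a b L ∧ L.S.ncard = 1) :
    ∀ c d : ℝ, a < c → c < d → d < b → Dominated P (Ioo c d) := by
  intro c d hac hcd hdb
  obtain ⟨L, ⟨hun, hdom⟩, hcard⟩ := h
  obtain ⟨i, hS⟩ := ncard_eq_one.1 hcard
  rw [LinkedList.union, hS, biUnion_singleton] at hun
  obtain ⟨u, v, -, hmono, hd, heq⟩ := hdom i (by simp [hS])
  rw [hun] at heq
  have hm : Monotone fun n => Ioo (u n) (v n) := monotone_nat_of_le_succ hmono
  have hc' : c ∈ Ioo a b := ⟨hac, by linarith⟩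
  have hd' : d ∈ Ioo a b := ⟨by linarith, hdb⟩
  rw [heq, mem_iUnion] at hc' hd'
  obtain ⟨n, hn⟩ := hc'
  obtain ⟨m, hm'⟩ := hd'
  have h1 := hm (le_max_left n m) hn
  have h2 := hm (le_max_right n m) hm'
  obtain ⟨K, hK, hs⟩ := hd (max n m)
  exact ⟨K, hK, (Ioo_subset_Ioo h1.1.le h2.2.le).trans hs⟩

/-- For `⋃₀ P ⊆ (a, b)`, the following are equivalent: (1) there is no
two-element outer cover of `(a, b)`; (2) `⋃₀ P = (a, b)` and there is a one-element inner
cover of `(a, b)`; (3) every interval `(c, d)` with `a < c < d < b` is dominated by `P`. -/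
theorem stmt16 (P : Set (Set ℝ)) (a b : ℝ) (hab : a < b)
    (hP : IsIntervalCollection P) (hU : ⋃₀ P ⊆ Ioo a b) :
    ((¬∃ L : LinkedList, IsOuterCover P a b L ∧ L.S.ncard = 2) ↔
      (⋃₀ P = Ioo a b ∧ ∃ L : LinkedList, IsInnerCover P a b L ∧ L.S.ncard = 1)) ∧
    ((⋃₀ P = Ioo a b ∧ ∃ L : LinkedList, IsInnerCover P a b L ∧ L.S.ncard = 1) ↔
      ∀ c d : ℝ, a < c → c < d → d < b → Dominated P (Ioo c d)) := by
  have h23 : (⋃₀ P = Ioo a b ∧ ∃ L : LinkedList, IsInnerCover P a b L ∧ L.S.ncard = 1) ↔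
      ∀ c d : ℝ, a < c → c < d → d < b → Dominated P (Ioo c d) :=
    ⟨fun h => aux_two_three P a b h.2, aux_three_two P a b hab hU⟩
  exact ⟨⟨fun h => h23.2 (aux_one_three P a b hP hU h),
    fun h => aux_three_one P a b (h23.1 h)⟩, h23⟩
end

section
/- Let P be a collection of nonempty bounded open intervals of ℝ with ∪P = (a,b) for real numbers a < b, and suppose there is a finite sequence x₁, …, xₙ in (a,b) satisfying a = L_P(x₁), R_P(x_i) = x_{i+1} for i = 1, …, n−1, and R_P(xₙ) = b. Then: (1) every outer cover of (a,b) with respect to P has at most n+1 elements; (2) there exists an outer cover of (a,b) with respect to P having ⌊n/2⌋ + 1 elements; (3) there exists an inner cover of (a,b) with respect to P having n+2 elements. -/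
open Set

theorem LinkedList.mono_a_le (L : LinkedList) {i j : ℤ} (hi : i ∈ L.S) (hj : j ∈ L.S)
    (hij : i ≤ j) : L.a i ≤ L.a j := by
  induction j, hij using Int.leInduction with
  | base => exact le_rfl
  | succ k hk ih =>
    have hkS := L.consecutive i hi _ hj k hk (by omega)
    exact (ih hkS).trans (L.mono_a k hkS hj).le

theorem LinkedList.mono_b_le (L : LinkedList) {i j : ℤ} (hi : i ∈ L.S) (hj : j ∈ L.S)
    (hij : i ≤ j) : L.b i ≤ L.b j := by
  induction j, hij using Int.leInduction with
  | base => exact le_rfl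
  | succ k hk ih =>
    have hkS := L.consecutive i hi _ hj k hk (by omega)
    exact (ih hkS).trans (L.mono_b k hkS hj).le

theorem LinkedList.gap_le (L : LinkedList) {i j : ℤ} (hi : i ∈ L.S) (hj : j ∈ L.S)
    (hij : i + 2 ≤ j) : L.b i < L.a j := by
  have h2 := L.consecutive i hi _ hj (i + 2) (by omega) hij
  exact (L.gap i hi h2).trans_le (L.mono_a_le h2 hj hij)

theorem mk_list (N : ℕ) (A B : ℕ → ℝ) (h1 : ∀ i ≤ N, A i < B i)
    (h2 : ∀ i < N, A i < A (i + 1)) (h3 : ∀ i < N, B i < B (i + 1))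
    (h4 : ∀ i < N, A (i + 1) < B i) (h5 : ∀ i, i + 2 ≤ N → B i < A (i + 2)) :
    ∃ L : LinkedList, L.union = Ioo (A 0) (B N) ∧ L.S.ncard = N + 1 ∧
      (∀ i ∈ L.S, ∃ k ≤ N, L.interval i = Ioo (A k) (B k)) ∧
      ∀ k ≤ N, ∃ i ∈ L.S, L.interval i = Ioo (A k) (B k) := by
  have hS : ∀ i : ℤ, i ∈ Icc (0 : ℤ) N → ∃ k : ℕ, k ≤ N ∧ i = k := by
    rintro i ⟨h0, hN⟩
    exact ⟨i.toNat, by omega, by omega⟩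
  let L : LinkedList :=
    { S := Icc (0 : ℤ) N
      nonempty := ⟨0, by simp⟩
      consecutive := by
        rintro i ⟨hi, _⟩ k ⟨_, hk⟩ j hij hjk
        exact ⟨by omega, by omega⟩
      a := fun i => A i.toNat
      b := fun i => B i.toNat
      lt := by
        intro i hi
        obtain ⟨k, hk, rfl⟩ := hS i hi
        simpa using h1 k hk
      mono_a := by
        intro i hi hi'
        obtain ⟨k, hk, rfl⟩ := hS i hi
        have := hi'.2
        have e : ((k : ℤ) + 1).toNat = k + 1 := by omega
        simpa [e] using h2 k (by omega)
      mono_b := by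
        intro i hi hi'
        obtain ⟨k, hk, rfl⟩ := hS i hi
        have := hi'.2
        have e : ((k : ℤ) + 1).toNat = k + 1 := by omega
        simpa [e] using h3 k (by omega)
      overlap := by
        intro i hi hi'
        obtain ⟨k, hk, rfl⟩ := hS i hi
        have := hi'.2
        have e : ((k : ℤ) + 1).toNat = k + 1 := by omega
        simpa [e] using h4 k (by omega)
      gap := by
        intro i hi hi'
        obtain ⟨k, hk, rfl⟩ := hS i hi
        have := hi'.2
        have e : ((k : ℤ) + 2).toNat = k + 2 := by omega
        simpa [e] using h5 k (by omega) }
  have hLI : ∀ k : ℕ, L.interval (k : ℤ) = Ioo (A k) (B k) := by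
    intro k
    simp [LinkedList.interval, L]
  have hA : ∀ k ≤ N, A 0 ≤ A k := by
    intro k
    induction k with
    | zero => intro _; exact le_rfl
    | succ k ih => intro hk; exact (ih (by omega)).trans (h2 k (by omega)).le
  have hB : ∀ m k, k + m = N → B k ≤ B N := by
    intro m
    induction m with
    | zero => intro k hk; rw [← hk]; simp
    | succ m ih => intro k hk; exact (h3 k (by omega)).le.trans (ih (k + 1) (by omega))
  refine ⟨L, ?_, ?_, ?_, ?_⟩
  · ext z
    simp only [LinkedList.union, mem_iUnion]
    constructor
    · rintro ⟨i, hi, hz⟩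
      obtain ⟨k, hk, rfl⟩ := hS i hi
      rw [hLI] at hz
      exact ⟨(hA k hk).trans_lt hz.1, hz.2.trans_le (hB (N - k) k (by omega))⟩
    · rintro ⟨hz1, hz2⟩
      have hex : ∃ i, z < B i := ⟨N, hz2⟩
      classical
      have hf := Nat.find_spec hex
      have hle : Nat.find hex ≤ N := Nat.find_min' hex hz2
      have hmin := fun m => @Nat.find_min _ _ hex m
      generalize Nat.find hex = k at *
      refine ⟨(k : ℤ), ⟨by omega, by omega⟩, ?_⟩
      rw [hLI]
      refine ⟨?_, hf⟩
      rcases k with _ | k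
      · exact hz1
      · have := hmin k (by omega)
        exact (h4 k (by omega)).trans_le (not_lt.1 this)
  · change (Icc (0 : ℤ) N).ncard = N + 1
    rw [← Finset.coe_Icc, Set.ncard_coe_finset]
    simp
  · intro i hi
    obtain ⟨k, hk, rfl⟩ := hS i hi
    exact ⟨k, hk, hLI k⟩
  · intro k hk
    exact ⟨k, ⟨by omega, by omega⟩, hLI k⟩

section facts
variable {P : Set (Set ℝ)} {a b : ℝ}

theorem mem_bounds (hU : ⋃₀ P = Ioo a b) {c d z : ℝ} (h : Ioo c d ∈ P) (hz : z ∈ Ioo c d) :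
    a ≤ c ∧ d ≤ b := by
  have hs : Ioo c d ⊆ Ioo a b := hU ▸ subset_sUnion_of_mem h
  exact (Ioo_subset_Ioo_iff (hz.1.trans hz.2)).1 hs

theorem exists_mem (hP : IsIntervalCollection P) (hU : ⋃₀ P = Ioo a b) {z : ℝ}
    (hz : z ∈ Ioo a b) : ∃ c d, Ioo c d ∈ P ∧ z ∈ Ioo c d := by
  rw [← hU] at hz
  obtain ⟨J, hJ, hzJ⟩ := hz
  obtain ⟨c, d, _, rfl⟩ := hP J hJ
  exact ⟨c, d, hJ, hzJ⟩

theorem le_rightEnd (hU : ⋃₀ P = Ioo a b) {c d z : ℝ} (h : Ioo c d ∈ P) (hz : z ∈ Ioo c d) :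
    d ≤ rightEnd P z :=
  le_csSup ⟨b, by rintro d' ⟨c', h', hz'⟩; exact (mem_bounds hU h' hz').2⟩ ⟨c, h, hz⟩

theorem exists_right (hP : IsIntervalCollection P) (hU : ⋃₀ P = Ioo a b) {z t : ℝ}
    (hz : z ∈ Ioo a b) (ht : t < rightEnd P z) :
    ∃ c d, Ioo c d ∈ P ∧ z ∈ Ioo c d ∧ t < d := by
  obtain ⟨c, d, h, hzz⟩ := exists_mem hP hU hz
  obtain ⟨d', ⟨c', h', hz'⟩, hd'⟩ := exists_lt_of_lt_csSup
    (show {d | ∃ c, Ioo c d ∈ P ∧ z ∈ Ioo c d}.Nonempty from ⟨d, c, h, hzz⟩) ht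
  exact ⟨c', d', h', hz', hd'⟩

theorem exists_left (hP : IsIntervalCollection P) (hU : ⋃₀ P = Ioo a b) {z t : ℝ}
    (hz : z ∈ Ioo a b) (ht : leftEnd P z < t) :
    ∃ c d, Ioo c d ∈ P ∧ z ∈ Ioo c d ∧ c < t := by
  obtain ⟨c, d, h, hzz⟩ := exists_mem hP hU hz
  obtain ⟨c', ⟨d', h', hz'⟩, hd'⟩ := exists_lt_of_csInf_lt
    (show {c | ∃ d, Ioo c d ∈ P ∧ z ∈ Ioo c d}.Nonempty from ⟨c, d, h, hzz⟩) ht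
  exact ⟨c', d', h', hz', hd'⟩

theorem approx_of_dominated {c d : ℝ} (h : c < d) (hd : Dominated P (Ioo c d)) :
    ApproxDominated P (Ioo c d) :=
  ⟨fun _ => c, fun _ => d, fun _ => h, fun _ => subset_rfl, fun _ => hd, (iUnion_const _).symm⟩

theorem exists_small {e δ : ℝ} (he : 0 < e) (hδ : 0 < δ) : ∃ n : ℕ, δ / (n + 2) < e := by
  obtain ⟨n, hn⟩ := exists_nat_gt (δ / e)
  refine ⟨n, ?_⟩
  rw [div_lt_iff₀ he] at hn
  rw [div_lt_iff₀ (by positivity)]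
  nlinarith

theorem approx_left (hP : IsIntervalCollection P) (hU : ⋃₀ P = Ioo a b) {z u : ℝ}
    (hz : z ∈ Ioo a b) (h : leftEnd P z = a) (hu : u ∈ Ioo a z) :
    ApproxDominated P (Ioo a u) := by
  have hδ : 0 < u - a := sub_pos.2 hu.1
  refine ⟨fun k => a + (u - a) / (k + 2), fun _ => u, ?_, ?_, ?_, ?_⟩
  · intro k
    have : (u - a) / ((k : ℝ) + 2) < u - a := div_lt_self hδ (by linarith [k.cast_nonneg (α := ℝ)])
    dsimp only
    linarith
  · intro k
    apply Ioo_subset_Ioo_left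
    dsimp only
    push_cast
    gcongr
    linarith
  · intro k
    have : 0 < (u - a) / ((k : ℝ) + 2) := by positivity
    obtain ⟨c, d, hm, hzz, hc⟩ := exists_left hP hU hz
      (show leftEnd P z < a + (u - a) / ((k : ℝ) + 2) by rw [h]; linarith)
    exact ⟨_, hm, Ioo_subset_Ioo hc.le (hu.2.trans hzz.2).le⟩
  · ext w
    simp only [mem_iUnion]
    constructor
    · rintro ⟨h1, h2⟩
      obtain ⟨k, hk⟩ := exists_small (sub_pos.2 h1) hδ
      exact ⟨k, by linarith, h2⟩
    · rintro ⟨k, h1, h2⟩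
      have : 0 < (u - a) / ((k : ℝ) + 2) := by positivity
      exact ⟨by linarith, h2⟩

theorem approx_right (hP : IsIntervalCollection P) (hU : ⋃₀ P = Ioo a b) {z v : ℝ}
    (hz : z ∈ Ioo a b) (h : rightEnd P z = b) (hv : v ∈ Ioo z b) :
    ApproxDominated P (Ioo v b) := by
  have hδ : 0 < b - v := sub_pos.2 hv.2
  refine ⟨fun _ => v, fun k => b - (b - v) / (k + 2), ?_, ?_, ?_, ?_⟩
  · intro k
    have : (b - v) / ((k : ℝ) + 2) < b - v := div_lt_self hδ (by linarith [k.cast_nonneg (α := ℝ)])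
    dsimp only
    linarith
  · intro k
    apply Ioo_subset_Ioo_right
    dsimp only
    push_cast
    gcongr
    linarith
  · intro k
    have : 0 < (b - v) / ((k : ℝ) + 2) := by positivity
    obtain ⟨c, d, hm, hzz, hc⟩ := exists_right hP hU hz
      (show b - (b - v) / ((k : ℝ) + 2) < rightEnd P z by rw [h]; linarith)
    exact ⟨_, hm, Ioo_subset_Ioo (hzz.1.trans hv.1).le hc.le⟩
  · ext w
    simp only [mem_iUnion]
    constructor
    · rintro ⟨h1, h2⟩
      obtain ⟨k, hk⟩ := exists_small (sub_pos.2 h2) hδ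
      exact ⟨k, h1, by linarith⟩
    · rintro ⟨k, h1, h2⟩
      have : 0 < (b - v) / ((k : ℝ) + 2) := by positivity
      exact ⟨h1, by linarith⟩

/-- Part (1). -/
theorem part_one (hP : IsIntervalCollection P) (hU : ⋃₀ P = Ioo a b)
    (n : ℕ) (y : ℕ → ℝ) (hy1 : y 1 ∈ Ioo a b) (hyn : y (n + 1) = b)
    (hmem : ∀ i : ℕ, 1 ≤ i → i ≤ n → y i ∈ Ioo a b)
    (hfirst : leftEnd P (y 1) = a)
    (hstep : ∀ i : ℕ, 1 ≤ i → i ≤ n → rightEnd P (y i) = y (i + 1))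
    (L : LinkedList) (hL : IsOuterCover P a b L) : L.S.Finite ∧ L.S.ncard ≤ n + 1 := by
  obtain ⟨hLU, hLP⟩ := hL
  have hbd : ∀ i ∈ L.S, a ≤ L.a i ∧ L.b i ≤ b := by
    intro i hi
    have : Ioo (L.a i) (L.b i) ⊆ Ioo a b := by
      rw [← hLU]
      exact subset_biUnion_of_mem (u := fun i => L.interval i) hi
    exact (Ioo_subset_Ioo_iff (L.lt i hi)).1 this
  have hcont : ∀ c d z, Ioo c d ∈ P → z ∈ Ioo c d → ∃ j ∈ L.S, L.a j ≤ c ∧ d ≤ L.b j := by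
    intro c d z h hz
    obtain ⟨j, hj, hs⟩ := hLP _ h
    exact ⟨j, hj, (Ioo_subset_Ioo_iff (hz.1.trans hz.2)).1 hs⟩
  have hback : ∀ k, k ∈ L.S → k - 1 ∈ L.S → y 1 < L.b (k - 1) := by
    intro k hk hk1
    have h1 := L.mono_a (k - 1) hk1 (by simpa using hk)
    rw [sub_add_cancel] at h1
    obtain ⟨c, d, hm, hz, hc⟩ := exists_left hP hU hy1
      (show leftEnd P (y 1) < L.a k by rw [hfirst]; linarith [(hbd _ hk1).1])
    obtain ⟨j, hj, hjc, hjd⟩ := hcont _ _ _ hm hz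
    have hjk : j ≤ k - 1 := by
      by_contra hcon
      have := L.mono_a_le hk hj (by omega)
      linarith
    have := L.mono_b_le hj hk1 hjk
    linarith [hz.2]
  have hleast : ∃ m ∈ L.S, m - 1 ∉ L.S ∧ y 1 < L.b m := by
    have hz : y 1 ∈ L.union := by rw [hLU]; exact hy1
    simp only [LinkedList.union, mem_iUnion] at hz
    obtain ⟨i, hi, hzi⟩ := hz
    by_cases h1 : i - 1 ∈ L.S
    · refine ⟨i - 1, h1, ?_, hback i hi h1⟩
      intro h2
      have h3 := hback (i - 1) h1 h2
      have h4 := L.gap_le h2 hi (by omega)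
      linarith [hzi.1]
    · exact ⟨i, hi, h1, hzi.2⟩
  obtain ⟨m, hm, hm1, hym⟩ := hleast
  have hlow : ∀ j ∈ L.S, m ≤ j := by
    intro j hj
    by_contra hcon
    exact hm1 (L.consecutive j hj m hm (m - 1) (by omega) (by omega))
  have hup : ∀ j ∈ L.S, j ≤ m + n := by
    intro j hj
    by_contra hcon
    have hin : ∀ k : ℤ, m ≤ k → k ≤ m + n + 1 → k ∈ L.S := fun k h1 h2 =>
      L.consecutive m hm j hj k h1 (by omega)
    have hind : ∀ i : ℕ, i ≤ n → y (i + 1) ≤ L.b (m + i) := by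
      intro i
      induction i with
      | zero => intro _; simpa using hym.le
      | succ i ih =>
        intro hi
        have hi' := ih (by omega)
        have hk := hin (m + i) (by omega) (by omega)
        have hk1 := hin (m + (i + 1 : ℕ)) (by omega) (by push_cast; omega)
        rw [← hstep (i + 1) (by omega) hi]
        by_contra hlt
        obtain ⟨c, d, hmP, hz, hc⟩ := exists_right hP hU (hmem (i + 1) (by omega) hi)
          (not_le.1 hlt)
        obtain ⟨j', hj', hjc, hjd⟩ := hcont _ _ _ hmP hz
        have : j' ≤ m + (i + 1 : ℕ) := by
          by_contra hcon'
          have := L.gap_le hk hj' (by push_cast at hcon'; omega)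
          linarith [hz.1]
        have := L.mono_b_le hj' hk1 this
        linarith
    have h1 := hind n le_rfl
    rw [hyn] at h1
    have hk := hin (m + n) (by omega) (by omega)
    have hk1 := hin (m + n + 1) (by omega) (by omega)
    have := L.mono_b _ hk hk1
    linarith [(hbd _ hk1).2]
  have hsub : L.S ⊆ (Finset.Icc m (m + n) : Finset ℤ) := by
    intro j hj
    simp [hlow j hj, hup j hj]
  refine ⟨(Finset.finite_toSet _).subset hsub, ?_⟩
  refine (Set.ncard_le_ncard hsub (Finset.finite_toSet _)).trans ?_
  rw [Set.ncard_coe_finset, Int.card_Icc]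
  omega

/-- Part (2). -/
theorem part_two (hP : IsIntervalCollection P) (hU : ⋃₀ P = Ioo a b)
    (n : ℕ) (y : ℕ → ℝ) (hy0 : y 0 = a) (hyb : ∀ i, n < i → y i = b)
    (hlt : ∀ i j, i < j → i ≤ n → y i < y j)
    (hstep : ∀ i : ℕ, 1 ≤ i → i ≤ n → rightEnd P (y i) = y (i + 1)) :
    ∃ L : LinkedList, IsOuterCover P a b L ∧ L.S.ncard = n / 2 + 1 := by
  have hle : ∀ i j, i ≤ j → y i ≤ y j := by
    intro i j hij
    rcases hij.eq_or_lt with rfl | h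
    · exact le_rfl
    · by_cases hi : i ≤ n
      · exact (hlt i j h hi).le
      · rw [hyb i (by omega), hyb j (by omega)]
  obtain ⟨L, h1, h2, h3, h4⟩ := mk_list (n / 2) (fun k => y (2 * k - 1)) (fun k => y (2 * k + 2))
    (fun i hi => hlt _ _ (by omega) (by omega)) (fun i hi => hlt _ _ (by omega) (by omega))
    (fun i hi => hlt _ _ (by omega) (by omega)) (fun i hi => hlt _ _ (by omega) (by omega))
    (fun i hi => hlt _ _ (by omega) (by omega))
  refine ⟨L, ⟨?_, ?_⟩, h2⟩
  · rw [h1]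
    simp only [mul_zero, zero_tsub, hy0]
    rw [hyb _ (by omega)]
  · intro J hJ
    obtain ⟨c, d, hcd, rfl⟩ := hP J hJ
    have hmid : (c + d) / 2 ∈ Ioo c d := ⟨by linarith, by linarith⟩
    obtain ⟨hac, hdb⟩ := mem_bounds hU hJ hmid
    have hex : ∃ i, c < y (i + 1) := ⟨n, by rw [hyb _ (by omega)]; linarith⟩
    have hi : ∃ i ≤ n, y i ≤ c ∧ c < y (i + 1) := by
      classical
      refine ⟨Nat.find hex, Nat.find_min' hex (by rw [hyb _ (by omega)]; linarith), ?_,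
        Nat.find_spec hex⟩
      have hmin := fun m => @Nat.find_min _ _ hex m
      generalize Nat.find hex = k at *
      rcases k with _ | k
      · rw [hy0]; exact hac
      · exact not_lt.1 (hmin k (by omega))
    obtain ⟨i, hin, hic, hci⟩ := hi
    have hd : d ≤ y (i + 2) := by
      by_cases hd' : d ≤ y (i + 1)
      · exact hd'.trans (hle _ _ (by omega))
      · by_cases hi1 : i + 1 ≤ n
        · rw [← hstep (i + 1) (by omega) hi1]
          exact le_rightEnd hU hJ ⟨hci, not_le.1 hd'⟩
        · rw [hyb _ (by omega)]; exact hdb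
    by_cases hc : (i + 1) / 2 ≤ n / 2
    · obtain ⟨j, hj, hjj⟩ := h4 _ hc
      refine ⟨j, hj, ?_⟩
      rw [hjj]
      exact Ioo_subset_Ioo ((hle _ _ (by omega)).trans hic) (hd.trans (hle _ _ (by omega)))
    · obtain ⟨j, hj, hjj⟩ := h4 _ (le_refl (n / 2))
      refine ⟨j, hj, ?_⟩
      rw [hjj]
      refine Ioo_subset_Ioo ((hle _ _ (by omega)).trans hic) ?_
      rw [hyb _ (by omega)]
      exact hdb

/-- Part (3). -/
theorem part_three (hP : IsIntervalCollection P) (hU : ⋃₀ P = Ioo a b)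
    (n : ℕ) (hn : 1 ≤ n) (y : ℕ → ℝ) (hy0 : y 0 = a) (hyb : ∀ i, n < i → y i = b)
    (hlt : ∀ i j, i < j → i ≤ n → y i < y j)
    (hmem : ∀ i : ℕ, 1 ≤ i → i ≤ n → y i ∈ Ioo a b)
    (hfirst : leftEnd P (y 1) = a)
    (hstep : ∀ i : ℕ, 1 ≤ i → i ≤ n → rightEnd P (y i) = y (i + 1)) :
    ∃ L : LinkedList, IsInnerCover P a b L ∧ L.S.ncard = n + 2 := by
  have key : ∀ (i : ℕ) (t : ℝ), ∃ p q : ℝ, 1 ≤ i → i ≤ n → t < y (i + 1) →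
      y (i - 1) < p ∧ p < y i ∧ y i < q ∧ q < y (i + 1) ∧ t < q ∧ Dominated P (Ioo p q) := by
    intro i t
    by_cases h : 1 ≤ i ∧ i ≤ n ∧ t < y (i + 1)
    · obtain ⟨h1, h2, h3⟩ := h
      obtain ⟨c, d, hm, hz, hd⟩ := exists_right hP hU (hmem i h1 h2)
        (show t < rightEnd P (y i) by rw [hstep i h1 h2]; exact h3)
      have hd2 := le_rightEnd hU hm hz
      rw [hstep i h1 h2] at hd2
      obtain ⟨p, hp1, hp2⟩ := exists_between
        (max_lt hz.1 (hlt (i - 1) i (by omega) (by omega)))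
      obtain ⟨q, hq1, hq2⟩ := exists_between (max_lt hz.2 hd)
      rw [max_lt_iff] at hp1 hq1
      exact ⟨p, q, fun _ _ _ => ⟨hp1.2, hp2, hq1.1, hq2.trans_le hd2, hq1.2, _, hm,
        Ioo_subset_Ioo hp1.1.le hq2.le⟩⟩
    · exact ⟨0, 0, fun h1 h2 h3 => (h ⟨h1, h2, h3⟩).elim⟩
  choose p q hpq using key
  let T : ℕ → ℝ := fun k => Nat.rec (y n) (fun k t => p (n - k) t) k
  have hT1 : ∀ k, T (k + 1) = p (n - k) (T k) := fun k => rfl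
  have hT : ∀ k, k < n → T k < y (n - k + 1) := by
    intro k
    induction k with
    | zero => intro _; exact hlt _ _ (by omega) (by omega)
    | succ k ih =>
      intro hk
      rw [hT1]
      have := (hpq (n - k) (T k) (by omega) (by omega) (ih (by omega))).2.1
      rwa [show n - (k + 1) + 1 = n - k by omega]
  have hpq' : ∀ i, 1 ≤ i → i ≤ n → y (i - 1) < T (n - i + 1) ∧ T (n - i + 1) < y i ∧
      y i < q i (T (n - i)) ∧ q i (T (n - i)) < y (i + 1) ∧ T (n - i) < q i (T (n - i)) ∧
      Dominated P (Ioo (T (n - i + 1)) (q i (T (n - i)))) := by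
    intro i h1 h2
    have h3 := hT (n - i) (by omega)
    have e : n - (n - i) = i := by omega
    rw [e] at h3
    rw [hT1, e]
    exact hpq i _ h1 h2 h3
  generalize hQ : (fun i => q i (T (n - i))) = Q at *
  have hQ' : ∀ i, q i (T (n - i)) = Q i := fun i => by rw [← hQ]
  simp only [hQ'] at hpq'
  obtain ⟨u, hu1, hu2⟩ := exists_between (hpq' 1 le_rfl hn).2.1
  obtain ⟨v, hv1, hv2⟩ := exists_between (hpq' n hn le_rfl).2.2.1
  have hAB : ∃ A B : ℕ → ℝ, A 0 = a ∧ B (n + 1) = b ∧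
      (∀ i ≤ n, y i < A (i + 1) ∧ A (i + 1) < B i ∧ B i < y (i + 1)) ∧
      (∀ i, 1 ≤ i → i ≤ n → y i < B i ∧ Dominated P (Ioo (A i) (B i))) := by
    refine ⟨fun i => if i = 0 then a else if i = n + 1 then v else T (n - i + 1),
      fun i => if i = 0 then u else if i = n + 1 then b else Q i, by simp, by simp, ?_, ?_⟩
    · intro i hi
      rcases Nat.eq_zero_or_pos i with rfl | hi0
      · have := hpq' 1 le_rfl hn
        simp only [zero_add, if_true, one_ne_zero, if_false, show ¬ (1 = n + 1) by omega]
        exact ⟨this.1, hu1, hu2⟩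
      · have hin := hpq' i hi0 hi
        rcases hi.eq_or_lt with rfl | hin'
        · simp only [show ¬ (i + 1 = 0) by omega, show ¬ (i = 0) by omega,
            show ¬ (i = i + 1) by omega, if_true, if_false]
          exact ⟨hv1, hv2, hin.2.2.2.1⟩
        · simp only [show ¬ (i + 1 = 0) by omega, show ¬ (i = 0) by omega,
            show ¬ (i = n + 1) by omega, show ¬ (i + 1 = n + 1) by omega, if_false]
          have h' := (hpq' (i + 1) (by omega) (by omega)).1
          have e : n - (i + 1) + 1 = n - i := by omega
          rw [e] at h' ⊢
          exact ⟨h', hin.2.2.2.2.1, hin.2.2.2.1⟩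
    · intro i hi0 hi
      have hin := hpq' i hi0 hi
      simp only [show ¬ (i = 0) by omega, show ¬ (i = n + 1) by omega, if_false]
      exact ⟨hin.2.2.1, hin.2.2.2.2.2⟩
  obtain ⟨A, B, hA0, hBn, hAB1, hAB2⟩ := hAB
  have hyn := hyb (n + 1) (by omega)
  have hAle : ∀ i ≤ n + 1, A i < B i := by
    intro i hi
    rcases Nat.eq_zero_or_pos i with rfl | hi0
    · have := hAB1 0 (by omega)
      linarith
    · have h1 := hAB1 (i - 1) (by omega)
      rw [Nat.sub_add_cancel hi0] at h1
      rcases hi.eq_or_lt with rfl | hin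
      · simp only [Nat.add_sub_cancel] at h1
        linarith
      · have := (hAB2 i hi0 (by omega)).1
        linarith
  obtain ⟨L, h1, h2, h3, h4⟩ := mk_list (n + 1) A B hAle
    (by
      intro i hi
      have h' := hAB1 i (by omega)
      rcases Nat.eq_zero_or_pos i with rfl | hi0
      · linarith
      · have h1 := hAB1 (i - 1) (by omega)
        rw [Nat.sub_add_cancel hi0] at h1
        linarith)
    (by
      intro i hi
      have h' := hAB1 i (by omega)
      rcases (show i + 1 ≤ n + 1 by omega).eq_or_lt with h | hin
      · obtain rfl : i = n := by omega
        linarith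
      · have := (hAB2 (i + 1) (by omega) (by omega)).1
        linarith)
    (fun i hi => (hAB1 i (by omega)).2.1)
    (by
      intro i hi
      have h' := hAB1 i (by omega)
      have h'' := hAB1 (i + 1) (by omega)
      exact h'.2.2.trans h''.1)
  refine ⟨L, ⟨by rw [h1, hA0, hBn], ?_⟩, h2⟩
  intro i hi
  obtain ⟨k, hk, hki⟩ := h3 i hi
  rw [hki]
  rcases Nat.eq_zero_or_pos k with rfl | hk0
  · have h' := hAB1 0 (by omega)
    rw [hA0]
    refine approx_left hP hU (hmem 1 le_rfl hn) hfirst ⟨?_, h'.2.2⟩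
    linarith
  · rcases hk.eq_or_lt with rfl | hkn
    · have h' := hAB1 n (by omega)
      rw [hBn]
      refine approx_right hP hU (hmem n hn le_rfl) ((hstep n hn le_rfl).trans hyn) ⟨h'.1, ?_⟩
      linarith
    · exact approx_of_dominated (hAle k hk) (hAB2 k hk0 (by omega)).2

end facts

/-- Suppose `⋃₀ P = (a, b)` and `x 1, …, x n ∈ (a, b)` satisfy
`L_P(x 1) = a`, `R_P(x i) = x (i+1)` for `1 ≤ i < n`, and `R_P(x n) = b`. Then: (1) every
outer cover of `(a, b)` has at most `n + 1` elements; (2) there is an outer cover with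
`⌊n/2⌋ + 1` elements; (3) there is an inner cover with `n + 2` elements. -/
theorem stmt17 (P : Set (Set ℝ)) (a b : ℝ) (hab : a < b)
    (hP : IsIntervalCollection P) (hU : ⋃₀ P = Ioo a b)
    (n : ℕ) (hn : 1 ≤ n) (x : ℕ → ℝ)
    (hmem : ∀ i : ℕ, 1 ≤ i → i ≤ n → x i ∈ Ioo a b)
    (hfirst : leftEnd P (x 1) = a)
    (hstep : ∀ i : ℕ, 1 ≤ i → i < n → rightEnd P (x i) = x (i + 1))
    (hlast : rightEnd P (x n) = b) :
    (∀ L : LinkedList, IsOuterCover P a b L → L.S.Finite ∧ L.S.ncard ≤ n + 1) ∧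
    (∃ L : LinkedList, IsOuterCover P a b L ∧ L.S.ncard = n / 2 + 1) ∧
    (∃ L : LinkedList, IsInnerCover P a b L ∧ L.S.ncard = n + 2) := by
  obtain ⟨y, hy⟩ : ∃ y : ℕ → ℝ, y = fun i => if i = 0 then a else if i ≤ n then x i else b :=
    ⟨_, rfl⟩
  have hy0 : y 0 = a := by simp [hy]
  have hyx : ∀ i, 1 ≤ i → i ≤ n → y i = x i := by
    intro i h1 h2
    simp [hy, h2, show i ≠ 0 by omega]
  have hyb : ∀ i, n < i → y i = b := by
    intro i h1
    simp [hy, show ¬ i ≤ n by omega, show i ≠ 0 by omega]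
  have hmem' : ∀ i : ℕ, 1 ≤ i → i ≤ n → y i ∈ Ioo a b := by
    intro i h1 h2
    rw [hyx i h1 h2]
    exact hmem i h1 h2
  have hstep' : ∀ i : ℕ, 1 ≤ i → i ≤ n → rightEnd P (y i) = y (i + 1) := by
    intro i h1 h2
    rw [hyx i h1 h2]
    rcases h2.eq_or_lt with rfl | h3
    · rw [hlast, hyb _ (by omega)]
    · rw [hyx (i + 1) (by omega) (by omega)]
      exact hstep i h1 h3
  have hfirst' : leftEnd P (y 1) = a := by rw [hyx 1 le_rfl hn, hfirst]
  have hsucc : ∀ i, i ≤ n → y i < y (i + 1) := by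
    intro i hi
    rcases Nat.eq_zero_or_pos i with rfl | hi0
    · rw [hy0]
      exact (hmem' 1 le_rfl hn).1
    · obtain ⟨c, d, hm, hz⟩ := exists_mem hP hU (hmem' i hi0 hi)
      rw [← hstep' i hi0 hi]
      exact hz.2.trans_le (le_rightEnd hU hm hz)
  have hlt : ∀ i j, i < j → i ≤ n → y i < y j := by
    intro i j hij hi
    induction j, hij using Nat.le_induction with
    | base => exact hsucc i hi
    | succ j hj ih =>
      by_cases hjn : j ≤ n
      · exact ih.trans (hsucc j hjn)
      · rw [hyb j (by omega)] at ih
        rw [hyb (j + 1) (by omega)]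
        exact ih
  exact ⟨fun L hL => part_one hP hU n y (hmem' 1 le_rfl hn) (hyb _ (by omega)) hmem' hfirst'
      hstep' L hL,
    part_two hP hU n y hy0 hyb hlt hstep',
    part_three hP hU n hn y hy0 hyb hlt hmem' hfirst' hstep'⟩
end

section
/- Let P be a collection of nonempty bounded open intervals of ℝ with ∪P ⊆ (a,b) for real numbers a < b. If there exists a sequence of k pairwise disjoint nonempty open subintervals (a_i, b_i), i = 1, …, k, of (a,b), none of which is dominated by P, then (a,b) has an outer cover with respect to P having at least ⌈k/2⌉ elements. -/
open Set

/-- The sorted version of the statement (indices starting at `0`). -/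
theorem outer_cover_of_sorted (P : Set (Set ℝ)) (a b : ℝ) (hab : a < b)
    (hP : IsIntervalCollection P) (hU : ⋃₀ P ⊆ Ioo a b)
    (k n : ℕ) (hn : 2 * n + 1 ≤ k ∨ n = 0) (c d : ℕ → ℝ)
    (hcd : ∀ i : ℕ, i < k → c i < d i)
    (hac : ∀ i : ℕ, i < k → a ≤ c i) (hdb : ∀ i : ℕ, i < k → d i ≤ b)
    (hs : ∀ i j : ℕ, i < j → j < k → d i ≤ c j)
    (hdom : ∀ i : ℕ, i < k → ¬Dominated P (Ioo (c i) (d i))) :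
    ∃ L : LinkedList, IsOuterCover P a b L ∧ L.S.ncard = n + 1 := by
  let A : ℤ → ℝ := fun i => if i ≤ 0 then a else c (2 * i - 1).toNat
  let B : ℤ → ℝ := fun i => if (n : ℤ) ≤ i then b else d (2 * i + 1).toNat
  have A0 : A 0 = a := by simp [A]
  have Bn : B n = b := by simp [B]
  have AS : ∀ i : ℕ, A ((i : ℤ) + 1) = c (2 * i + 1) := by
    intro i
    have h : ¬ ((i : ℤ) + 1 ≤ 0) := by omega
    have h2 : (2 * ((i : ℤ) + 1) - 1).toNat = 2 * i + 1 := by omega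
    simp only [A, if_neg h, h2]
  have BS : ∀ i : ℕ, i < n → B (i : ℤ) = d (2 * i + 1) := by
    intro i hi
    have h : ¬ ((n : ℤ) ≤ i) := by omega
    have h2 : (2 * (i : ℤ) + 1).toNat = 2 * i + 1 := by omega
    simp only [B, if_neg h, h2]
  -- strict separation
  have hss : ∀ i j : ℕ, i + 1 < j → j < k → d i < c j := by
    intro i j hij hj
    have h1 := hs i (i + 1) (by omega) (by omega)
    have h2 := hcd (i + 1) (by omega)
    have h3 := hs (i + 1) j (by omega) hj
    linarith
  have haS : ∀ j : ℕ, 0 < j → j < k → a < c j := by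
    intro j hj hjk
    have h1 := hac 0 (by omega)
    have h2 := hcd 0 (by omega)
    have h3 := hs 0 j hj hjk
    linarith
  have hbS : ∀ j : ℕ, j + 1 < k → d j < b := by
    intro j hjk
    have h1 := hdb (j + 1) (by omega)
    have h2 := hcd (j + 1) (by omega)
    have h3 := hs j (j + 1) (by omega) hjk
    linarith
  have Age : ∀ i : ℕ, i ≤ n → a ≤ A i := by
    intro i hi
    rcases i with _ | i
    · simp [A]
    · push_cast
      rw [AS]
      exact hac _ (by omega)
  have Ble : ∀ i : ℕ, i ≤ n → B i ≤ b := by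
    intro i hi
    rcases hi.lt_or_eq with h | rfl
    · rw [BS i h]
      exact hdb _ (by omega)
    · rw [Bn]
  have monoA : ∀ i : ℕ, i + 1 ≤ n → A i < A ((i : ℤ) + 1) := by
    intro i hi
    rw [AS]
    rcases i with _ | i
    · simp only [Nat.cast_zero, A0]
      exact haS _ (by omega) (by omega)
    · push_cast
      rw [AS]
      have h1 := hcd (2 * i + 1) (by omega)
      have h2 := hss (2 * i + 1) (2 * (i + 1) + 1) (by omega) (by omega)
      linarith
  have monoB : ∀ i : ℕ, i + 1 ≤ n → B i < B ((i : ℤ) + 1) := by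
    intro i hi
    rw [BS i (by omega)]
    rcases hi.lt_or_eq with h | h
    · have := BS (i + 1) h
      push_cast at this
      rw [this]
      have h1 := hcd (2 * (i + 1) + 1) (by omega)
      have h2 := hss (2 * i + 1) (2 * (i + 1) + 1) (by omega) (by omega)
      linarith
    · have : ((i : ℤ) + 1) = n := by omega
      rw [this, Bn]
      exact hbS _ (by omega)
  have ov : ∀ i : ℕ, i + 1 ≤ n → A ((i : ℤ) + 1) < B i := by
    intro i hi
    rw [AS, BS i (by omega)]
    exact hcd _ (by omega)
  have gp : ∀ i : ℕ, i + 2 ≤ n → B i < A ((i : ℤ) + 2) := by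
    intro i hi
    have := AS (i + 1)
    have e : ((i + 1 : ℕ) : ℤ) + 1 = (i : ℤ) + 2 := by push_cast; ring
    rw [e] at this
    rw [this, BS i (by omega)]
    exact hss _ _ (by omega) (by omega)
  have hlt : ∀ i : ℕ, i ≤ n → A i < B i := by
    intro i hi
    rcases hi.lt_or_eq with h | h
    · exact (monoA i h).trans (ov i h)
    · rcases i with _ | i
      · rw [h, Bn, ← h]
        simpa [A0] using hab
      · have h1 := ov i (by omega)
        have h2 := monoB i (by omega)
        push_cast
        exact h1.trans h2
  let L : LinkedList :=
    { S := Icc 0 (n : ℤ)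
      nonempty := ⟨0, by simp⟩
      consecutive := by
        intro i hi k hk j h1 h2
        exact ⟨hi.1.trans h1, h2.trans hk.2⟩
      a := A
      b := B
      lt := by
        rintro i ⟨h0, h1⟩
        lift i to ℕ using h0
        exact hlt i (by omega)
      mono_a := by
        rintro i ⟨h0, h1⟩ ⟨h2, h3⟩
        lift i to ℕ using h0
        exact monoA i (by omega)
      mono_b := by
        rintro i ⟨h0, h1⟩ ⟨h2, h3⟩
        lift i to ℕ using h0
        exact monoB i (by omega)
      overlap := by
        rintro i ⟨h0, h1⟩ ⟨h2, h3⟩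
        lift i to ℕ using h0
        exact ov i (by omega)
      gap := by
        rintro i ⟨h0, h1⟩ ⟨h2, h3⟩
        lift i to ℕ using h0
        exact gp i (by omega) }
  refine ⟨L, ⟨?_, ?_⟩, ?_⟩
  · apply Subset.antisymm
    · intro x hx
      simp only [LinkedList.union, mem_iUnion] at hx
      obtain ⟨i, ⟨h0, h1⟩, hx1, hx2⟩ := hx
      lift i to ℕ using h0
      exact ⟨(Age i (by omega)).trans_lt hx1, hx2.trans_le (Ble i (by omega))⟩
    · rintro x ⟨hx1, hx2⟩
      have hex : ∃ i : ℕ, x < B i := ⟨n, by rw [Bn]; exact hx2⟩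
      classical
      have hmin : Nat.find hex ≤ n := Nat.find_min' hex (by rw [Bn]; exact hx2)
      have hsp := Nat.find_spec hex
      have hm := fun m => Nat.find_min (H := hex) (m := m)
      generalize Nat.find hex = i at hmin hsp hm
      simp only [LinkedList.union, mem_iUnion]
      refine ⟨(i : ℤ), ⟨by omega, by omega⟩, ?_, hsp⟩
      change A i < x
      rcases i with _ | i
      · simpa [A0] using hx1
      · have h1 := hm i (by omega)
        push_cast
        exact (ov i hmin).trans_le (not_lt.1 h1)
  · intro J hJ
    obtain ⟨x, y, hxy, rfl⟩ := hP J hJ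
    have hsub : Ioo x y ⊆ Ioo a b := (subset_sUnion_of_mem hJ).trans hU
    obtain ⟨hax, hyb⟩ := (Ioo_subset_Ioo_iff hxy).1 hsub
    have hex : ∃ i : ℕ, y ≤ B i := ⟨n, by rw [Bn]; exact hyb⟩
    classical
    have hmin : Nat.find hex ≤ n := Nat.find_min' hex (by rw [Bn]; exact hyb)
    have hsp := Nat.find_spec hex
    have hm := fun m => Nat.find_min (H := hex) (m := m)
    generalize Nat.find hex = i at hmin hsp hm
    refine ⟨(i : ℤ), ⟨by omega, by omega⟩, Ioo_subset_Ioo ?_ hsp⟩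
    change A i ≤ x
    rcases i with _ | i
    · simpa [A0] using hax
    · have h1 := hm i (by omega)
      push_cast
      by_contra hcon
      rw [AS] at hcon
      rw [BS i (by omega)] at h1
      exact hdom (2 * i + 1) (by omega)
        ⟨_, hJ, Ioo_subset_Ioo (not_le.1 hcon).le (not_le.1 h1).le⟩
  · change (Icc 0 (n : ℤ)).ncard = n + 1
    rw [← Finset.coe_Icc, Set.ncard_coe_finset, Int.card_Icc]
    omega

/-- For `⋃₀ P ⊆ (a, b)`: if there are `k` pairwise disjoint nonempty open
subintervals `(c i, d i)` of `(a, b)`, none dominated by `P`, then `(a, b)` has an outer cover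
with respect to `P` having at least `⌈k/2⌉` elements. -/
theorem stmt18 (P : Set (Set ℝ)) (a b : ℝ) (hab : a < b)
    (hP : IsIntervalCollection P) (hU : ⋃₀ P ⊆ Ioo a b)
    (k : ℕ) (c d : ℕ → ℝ)
    (hcd : ∀ i : ℕ, 1 ≤ i → i ≤ k → c i < d i)
    (hsub : ∀ i : ℕ, 1 ≤ i → i ≤ k → Ioo (c i) (d i) ⊆ Ioo a b)
    (hdisj : ∀ i j : ℕ, 1 ≤ i → i ≤ k → 1 ≤ j → j ≤ k → i ≠ j →
      Disjoint (Ioo (c i) (d i)) (Ioo (c j) (d j)))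
    (hdom : ∀ i : ℕ, 1 ≤ i → i ≤ k → ¬Dominated P (Ioo (c i) (d i))) :
    ∃ L : LinkedList, IsOuterCover P a b L ∧ (L.S.Infinite ∨ (k + 1) / 2 ≤ L.S.ncard) := by
  let f : Fin k → ℝ := fun i => c (i.1 + 1)
  let σ : Equiv.Perm (Fin k) := Tuple.sort f
  have hmono : Monotone (f ∘ σ) := Tuple.monotone_sort f
  let t : ℕ → ℕ := fun i => if h : i < k then (σ ⟨i, h⟩).1 + 1 else 0
  have ht : ∀ i (h : i < k), t i = (σ ⟨i, h⟩).1 + 1 := fun i h => dif_pos h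
  have ht1 : ∀ i, i < k → 1 ≤ t i := by
    intro i h
    rw [ht i h]
    omega
  have htk : ∀ i, i < k → t i ≤ k := by
    intro i h
    rw [ht i h]
    exact (σ ⟨i, h⟩).2
  have hb : ∀ i, i < k → a ≤ c (t i) ∧ d (t i) ≤ b := fun i h =>
    (Ioo_subset_Ioo_iff (hcd _ (ht1 i h) (htk i h))).1 (hsub _ (ht1 i h) (htk i h))
  obtain ⟨L, hL, hc⟩ := outer_cover_of_sorted P a b hab hP hU k ((k - 1) / 2) (by omega)
    (fun i => c (t i)) (fun i => d (t i))
    (fun i h => hcd _ (ht1 i h) (htk i h)) (fun i h => (hb i h).1) (fun i h => (hb i h).2)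
    (by
      intro i j hij hj
      have hi : i < k := hij.trans hj
      have hle : c (t i) ≤ c (t j) := by
        rw [ht i hi, ht j hj]
        exact hmono (show (⟨i, hi⟩ : Fin k) ≤ ⟨j, hj⟩ from hij.le)
      have hne : t i ≠ t j := by
        intro he
        rw [ht i hi, ht j hj] at he
        have h2 := σ.injective (Fin.ext (Nat.succ_injective he))
        have h3 : i = j := congrArg Fin.val h2
        omega
      have hd := hdisj _ _ (ht1 i hi) (htk i hi) (ht1 j hj) (htk j hj) hne
      rw [Ioo_disjoint_Ioo, max_eq_right hle] at hd
      rcases min_le_iff.1 hd with h | h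
      · exact h
      · exact absurd (hcd _ (ht1 j hj) (htk j hj)) (not_lt.2 h))
    (fun i h => hdom _ (ht1 i h) (htk i h))
  exact ⟨L, hL, Or.inr (by omega)⟩
end
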